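/- arXiv:2501.07844 — 5 statements merged into one kernel-verified Lean document; each statement's English description precedes it below -/
import Mathlib

section
/- Let D ≥ 1, let p ∈ (0,1] and d ∈ [0,1]. For all density matrices ρ and σ on ℂ^D that are d-close in trace distance, and for every measurement effect M on ℂ^D, Re Tr(M · ((1−p)ρ + (p/D)·I)) ≤ (1 + (1−p)dD/p) · Re Tr(M · ((1−p)σ + (p/D)·I)). In other words, the depolarizing mechanism with parameter p provides ε-quantum differential privacy with ε = ln(1 + (1−p)dD/p). -/
open Matrix Complex ComplexOrder

/-- A density matrix: positive semidefinite with trace 1. -/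
def IsDensityMatrix {D : ℕ} (ρ : Matrix (Fin D) (Fin D) ℂ) : Prop :=
  ρ.PosSemidef ∧ ρ.trace = 1

/-- A measurement effect: both `M` and `1 - M` are positive semidefinite. -/
def IsEffect {D : ℕ} (M : Matrix (Fin D) (Fin D) ℂ) : Prop :=
  M.PosSemidef ∧ (1 - M).PosSemidef

/-- Variational characterization of trace distance at most `d`. -/
def TraceClose {D : ℕ} (d : ℝ) (ρ σ : Matrix (Fin D) (Fin D) ℂ) : Prop :=
  ∀ M : Matrix (Fin D) (Fin D) ℂ, IsEffect M → ((M * (ρ - σ)).trace).re ≤ d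

/-!
Write `t = Tr M`. Every eigenvalue of a positive semidefinite matrix is at most its trace, so
`M / t` is again an effect when `t ≠ 0`. Testing trace distance against this rescaled effect
gives the key estimate `Re Tr (M (ρ - σ)) ≤ d t`, which improves on the bound `d` when `t < 1`
(`TraceClose.re_trace_mul_sub_le`). On the other hand, since `Tr (M σ) ≥ 0`, the depolarized
probability `Re Tr (M E(σ))` is at least `(p / D) t`. The difference of the two sides
of the claim is controlled by comparing these two multiples of `t`.
-/

/-- Each eigenvalue of a positive semidefinite matrix is at most the sum of all of them, whence
`M ≤ Tr M` in the Loewner order. -/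
lemma Matrix.PosSemidef.trace_smul_one_sub {D : ℕ} {M : Matrix (Fin D) (Fin D) ℂ}
    (hM : M.PosSemidef) : (M.trace • (1 : Matrix (Fin D) (Fin D) ℂ) - M).PosSemidef := by
  have hd : (diagonal (fun i => M.trace - (hM.1.eigenvalues i : ℂ))).PosSemidef := by
    refine PosSemidef.diagonal fun i => ?_
    rw [hM.1.trace_eq_sum_eigenvalues]
    simp only [Pi.zero_apply, sub_nonneg]
    have h := Finset.single_le_sum (f := hM.1.eigenvalues)
      (fun j _ => hM.eigenvalues_nonneg j) (Finset.mem_univ i)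
    have h' := Complex.real_le_real.mpr h
    simpa using h'
  have h := hd.mul_mul_conjTranspose_same (hM.1.eigenvectorUnitary : Matrix (Fin D) (Fin D) ℂ)
  convert h using 1
  have hs : M = hM.1.eigenvectorUnitary * diagonal (fun i => (hM.1.eigenvalues i : ℂ)) *
      (hM.1.eigenvectorUnitary : Matrix (Fin D) (Fin D) ℂ)ᴴ := by
    conv_lhs => rw [hM.1.spectral_theorem, Unitary.conjStarAlgAut_apply]
    rfl
  have hU : (hM.1.eigenvectorUnitary : Matrix (Fin D) (Fin D) ℂ) *
      (hM.1.eigenvectorUnitary : Matrix (Fin D) (Fin D) ℂ)ᴴ = 1 :=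
    Unitary.coe_mul_star_self hM.1.eigenvectorUnitary
  rw [← diagonal_sub, ← smul_one_eq_diagonal, mul_sub, sub_mul, ← hs, mul_smul_comm, mul_one,
    smul_mul_assoc, hU]

open scoped MatrixOrder in
lemma Matrix.PosSemidef.trace_mul_nonneg {D : ℕ} {M S : Matrix (Fin D) (Fin D) ℂ}
    (hM : M.PosSemidef) (hS : S.PosSemidef) : 0 ≤ (M * S).trace := by
  obtain ⟨B, rfl⟩ := CStarAlgebra.nonneg_iff_eq_star_mul_self.mp hM.nonneg
  rw [Matrix.star_eq_conjTranspose, Matrix.mul_assoc, Matrix.trace_mul_comm]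
  exact (hS.mul_mul_conjTranspose_same B).trace_nonneg

/-- Trace distance controls the bias of a test proportionally to its trace: test against the
rescaled effect `M / Tr M`. -/
lemma TraceClose.re_trace_mul_sub_le {D : ℕ} {d : ℝ} {ρ σ M : Matrix (Fin D) (Fin D) ℂ}
    (h : TraceClose d ρ σ) (hM : M.PosSemidef) :
    ((M * (ρ - σ)).trace).re ≤ d * M.trace.re := by
  obtain ⟨ht, him⟩ := Complex.le_def.mp hM.trace_nonneg
  have htr : M.trace = ((M.trace.re : ℝ) : ℂ) := Complex.ext rfl (by simpa using him.symm)
  rcases ht.eq_or_lt with h0 | hpos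
  · have hM0 : M = 0 := hM.trace_eq_zero_iff.mp (by rw [htr, ← h0]; simp)
    simp [hM0]
  · simp only [Complex.zero_re] at hpos
    have hinv : (0 : ℝ) ≤ M.trace.re⁻¹ := inv_nonneg.mpr hpos.le
    have heff : IsEffect (M.trace.re⁻¹ • M) := by
      refine ⟨hM.smul hinv, ?_⟩
      have h2 := hM.trace_smul_one_sub.smul hinv
      rwa [htr, Complex.coe_smul, smul_sub, Complex.ofReal_re, smul_smul,
        inv_mul_cancel₀ hpos.ne', one_smul] at h2
    have h3 := h _ heff
    rw [smul_mul_assoc, Matrix.trace_smul, Complex.smul_re, smul_eq_mul,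
      inv_mul_le_iff₀ hpos] at h3
    linarith

/-- The depolarizing mechanism with parameter `p` provides `ε`-QDP with
`ε = ln (1 + (1-p) d D / p)`. -/
theorem depolarizing_mechanism_QDP
    {D : ℕ} (hD : 1 ≤ D) {p d : ℝ} (hp0 : 0 < p) (hp1 : p ≤ 1)
    (hd0 : 0 ≤ d) (hd1 : d ≤ 1)
    (ρ σ : Matrix (Fin D) (Fin D) ℂ)
    (hρ : IsDensityMatrix ρ) (hσ : IsDensityMatrix σ)
    (hclose : TraceClose d ρ σ)
    (M : Matrix (Fin D) (Fin D) ℂ) (hM : IsEffect M) :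
    ((M * ((1 - p) • ρ + (p / D) • (1 : Matrix (Fin D) (Fin D) ℂ))).trace).re ≤
      (1 + (1 - p) * d * D / p) *
        ((M * ((1 - p) • σ + (p / D) • (1 : Matrix (Fin D) (Fin D) ℂ))).trace).re := by
  obtain ⟨hMp, -⟩ := hM
  have hdiff := hclose.re_trace_mul_sub_le hMp
  have hσ0 : 0 ≤ ((M * σ).trace).re := (Complex.le_def.mp (hMp.trace_mul_nonneg hσ.1)).1
  have hD0 : (0 : ℝ) < D := by exact_mod_cast hD
  simp only [mul_sub, mul_add, mul_smul_comm, mul_one, Matrix.trace_sub, Matrix.trace_add,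
    Matrix.trace_smul, Complex.sub_re, Complex.add_re, Complex.smul_re, smul_eq_mul] at hdiff ⊢
  have hq : 0 ≤ 1 - p := by linarith
  have hk : 0 ≤ (1 - p) * d * D / p := by positivity
  have h1 := mul_le_mul_of_nonneg_left hdiff hq
  have h2 := mul_nonneg hk (mul_nonneg hq hσ0)
  -- The excess factor times the noise weight `p / D` is exactly `(1 - p) d`.
  have h3 : (1 - p) * d * D / p * (p / D * M.trace.re) = (1 - p) * (d * M.trace.re) := by
    field_simp
  linarith
end

section
/- Let D ≥ 1, p ∈ (0,1], d ∈ [0,1], δ ≥ 0, and set ε = max{0, ln(1 + (D/p)((1−p)d − δ))}. For all density matrices ρ and σ on ℂ^D that are d-close in trace distance, and for every measurement effect M on ℂ^D, Re Tr(M · ((1−p)ρ + (p/D)·I)) ≤ exp(ε) · Re Tr(M · ((1−p)σ + (p/D)·I)) + δ. In other words, the global depolarizing mechanism provides (ε, δ)-quantum differential privacy with this ε. -/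
/-!
Write `a = Re Tr(Mρ)`, `b = Re Tr(Mσ)`, `m = Re Tr M` and `k = (1 - p) d - δ`. Besides `b ≥ 0`, the
key point is `a - b ≤ d * min 1 m`: the bound by `d` is closeness tested on `M`, and the bound by
`d * m` is closeness tested on `m⁻¹ M` (for `m > 0`), which is again an effect because a positive
semidefinite matrix is dominated by its trace times the identity. If `k ≤ 0`, the additive
slack `δ` already covers `(1 - p)(a - b)`. If `k > 0`, then `exp ε = 1 + (D / p) k`, and the depolarizing
part `(p / D) m` of the output turns the factor `(D / p) k` into an additive slack `k m`, which together
with `δ` covers `(1 - p)(a - b)`.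
-/

open Matrix Complex ComplexOrder

/-- The trace of a product of two positive semidefinite matrices is nonnegative. -/
lemma re_trace_mul_nonneg {D : ℕ} {A B : Matrix (Fin D) (Fin D) ℂ}
    (hA : A.PosSemidef) (hB : B.PosSemidef) : 0 ≤ ((A * B).trace).re := by
  obtain ⟨n, v, rfl⟩ := Matrix.posSemidef_iff_eq_sum_vecMulVec.mp hA
  rw [Finset.sum_mul, Matrix.trace_sum, Complex.re_sum]
  refine Finset.sum_nonneg fun i _ => ?_
  have h := hB.dotProduct_mulVec_nonneg (v i)
  rw [Matrix.vecMulVec_mul, Matrix.trace_vecMulVec, dotProduct_comm, ← Matrix.dotProduct_mulVec]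
  exact (Complex.le_def.mp h).1

/-- A positive semidefinite matrix is dominated by its trace times the identity: each eigenvalue is
at most the sum of all of them. -/
lemma posSemidef_trace_smul_one_sub {D : ℕ} {A : Matrix (Fin D) (Fin D) ℂ} (hA : A.PosSemidef) :
    (A.trace • (1 : Matrix (Fin D) (Fin D) ℂ) - A).PosSemidef := by
  set l := hA.1.eigenvalues with hl
  set U := hA.1.eigenvectorUnitary
  have hdiag : (Matrix.diagonal fun i => ((∑ j, l j : ℝ) : ℂ) - (l i : ℂ)).PosSemidef := by
    rw [Matrix.posSemidef_diagonal_iff]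
    intro i
    rw [← Complex.ofReal_sub]
    refine Complex.zero_le_real.mpr (sub_nonneg.mpr ?_)
    exact Finset.single_le_sum (fun j _ => hA.eigenvalues_nonneg j) (Finset.mem_univ i)
  have hconj := hdiag.mul_mul_conjTranspose_same (U : Matrix (Fin D) (Fin D) ℂ)
  have hspec : A = (U : Matrix (Fin D) (Fin D) ℂ) * Matrix.diagonal (fun i => (l i : ℂ)) *
      (U : Matrix (Fin D) (Fin D) ℂ)ᴴ := by
    have h := hA.1.spectral_theorem
    rw [Unitary.conjStarAlgAut_apply] at h
    exact h
  have hU : (U : Matrix (Fin D) (Fin D) ℂ) * (U : Matrix (Fin D) (Fin D) ℂ)ᴴ = 1 :=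
    Unitary.mul_star_self_of_mem U.2
  have htr : A.trace = ((∑ j, l j : ℝ) : ℂ) := by
    rw [hA.1.trace_eq_sum_eigenvalues]
    push_cast
    rfl
  convert hconj using 1
  rw [← Matrix.diagonal_sub, mul_sub, sub_mul, ← hspec, htr, ← Matrix.smul_one_eq_diagonal,
    mul_smul_comm, mul_one, smul_mul_assoc, hU]

/-- On a positive semidefinite matrix, closeness in trace distance gives a bound proportional to its
trace, since rescaling it to trace one makes it an effect. -/
lemma TraceClose.re_trace_mul_sub_le_mul {D : ℕ} {d : ℝ} {ρ σ M : Matrix (Fin D) (Fin D) ℂ}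
    (hclose : TraceClose d ρ σ) (hM : M.PosSemidef) :
    ((M * (ρ - σ)).trace).re ≤ M.trace.re * d := by
  have hnn : 0 ≤ M.trace := hM.trace_nonneg
  have hcast : M.trace = (M.trace.re : ℂ) :=
    Complex.ext rfl (by simpa using (Complex.le_def.mp hnn).2.symm)
  have hre : 0 ≤ M.trace.re := (Complex.le_def.mp hnn).1
  rcases hre.eq_or_lt with h0 | hpos
  · have : M = 0 := hM.trace_eq_zero_iff.mp (by rw [hcast, ← h0]; simp)
    simp [this]
  · set m := M.trace.re with hm
    have hinv : (0 : ℂ) ≤ ((m⁻¹ : ℝ) : ℂ) := Complex.zero_le_real.mpr (by positivity)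
    have heff : IsEffect (((m⁻¹ : ℝ) : ℂ) • M) := by
      refine ⟨hM.smul hinv, ?_⟩
      have h := (posSemidef_trace_smul_one_sub hM).smul hinv
      rwa [smul_sub, smul_smul, hcast, ← Complex.ofReal_mul, inv_mul_cancel₀ hpos.ne',
        Complex.ofReal_one, one_smul] at h
    have h := hclose _ heff
    rw [smul_mul_assoc, Matrix.trace_smul, smul_eq_mul, Complex.re_ofReal_mul,
      inv_mul_le_iff₀ hpos] at h
    exact h

lemma re_trace_mul_depolarized {D : ℕ} (p : ℝ) (M ρ : Matrix (Fin D) (Fin D) ℂ) :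
    ((M * ((1 - p) • ρ + (p / D) • (1 : Matrix (Fin D) (Fin D) ℂ))).trace).re =
      (1 - p) * ((M * ρ).trace).re + p / D * M.trace.re := by
  simp [mul_add, Matrix.trace_add, Matrix.trace_smul]

/-- The global depolarizing mechanism provides `(ε, δ)`-QDP with
`ε = max {0, ln (1 + (D/p)((1-p)d - δ))}`. -/
theorem global_depolarizing_mechanism_epsDelta_QDP
    {D : ℕ} (hD : 1 ≤ D) {p d δ : ℝ} (hp0 : 0 < p) (hp1 : p ≤ 1)
    (hd0 : 0 ≤ d) (hd1 : d ≤ 1) (hδ : 0 ≤ δ)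
    (ρ σ : Matrix (Fin D) (Fin D) ℂ)
    (hρ : IsDensityMatrix ρ) (hσ : IsDensityMatrix σ)
    (hclose : TraceClose d ρ σ)
    (M : Matrix (Fin D) (Fin D) ℂ) (hM : IsEffect M) :
    ((M * ((1 - p) • ρ + (p / D) • (1 : Matrix (Fin D) (Fin D) ℂ))).trace).re ≤
      Real.exp (max 0 (Real.log (1 + (D / p) * ((1 - p) * d - δ)))) *
        ((M * ((1 - p) • σ + (p / D) • (1 : Matrix (Fin D) (Fin D) ℂ))).trace).re + δ := by
  have hD0 : (0 : ℝ) < D := by exact_mod_cast hD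
  have hb : 0 ≤ ((M * σ).trace).re := re_trace_mul_nonneg hM.1 hσ.1
  have hm : 0 ≤ M.trace.re := (Complex.le_def.mp hM.1.trace_nonneg).1
  have hab := hclose M hM
  have habm := hclose.re_trace_mul_sub_le_mul hM.1
  rw [mul_sub, Matrix.trace_sub, Complex.sub_re] at hab habm
  rw [re_trace_mul_depolarized, re_trace_mul_depolarized]
  set a := ((M * ρ).trace).re
  set b := ((M * σ).trace).re
  set m := M.trace.re
  have hq : 0 ≤ 1 - p := by linarith
  have hqab := mul_le_mul_of_nonneg_left hab hq
  rcases le_or_gt ((1 - p) * d - δ) 0 with hk | hk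
  -- Only `exp ε ≥ 1` matters when `k ≤ 0`; the logarithm may have a negative argument.
  · have hE : 1 ≤ Real.exp (max 0 (Real.log (1 + (D / p) * ((1 - p) * d - δ)))) :=
      Real.one_le_exp (le_max_left _ _)
    have hy : 0 ≤ (1 - p) * b + p / D * m := by positivity
    have := mul_le_mul_of_nonneg_right hE hy
    linarith
  · set k := (1 - p) * d - δ with hkdef
    have hx : 0 ≤ (D / p) * k := by positivity
    rw [max_eq_right (Real.log_nonneg (by linarith)), Real.exp_log (by linarith)]
    have hslack : (1 - p) * (a - b) - δ ≤ k * m := by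
      rcases le_total m 1 with hm1 | hm1
      · have h1 := mul_le_mul_of_nonneg_left habm hq
        have h2 : δ * m ≤ δ := mul_le_of_le_one_right hδ hm1
        have h3 : k * m = (1 - p) * (m * d) - δ * m := by rw [hkdef]; ring
        linarith
      · have := le_mul_of_one_le_right hk.le hm1
        linarith
    have hkm : (D / p) * k * (p / D * m) = k * m := by field_simp
    have hkb : 0 ≤ (D / p) * k * ((1 - p) * b) := by positivity
    linarith
end

section
/- Let γ ∈ (0,1] and d ≥ 0. For all density matrices ρ and σ on ℂ² that are d-close in trace distance, and for every measurement effect M on ℂ², Re Tr(M · E_GAD(ρ)) ≤ (1 + 2d√(1−γ)/(1−√(1−γ))) · Re Tr(M · E_GAD(σ)), where E_GAD is the generalized amplitude damping channel with environment parameter p = 1/2 and damping parameter γ. In other words, the generalized amplitude damping mechanism provides ε-quantum differential privacy with ε = ln(1 + 2d√(1−γ)/(1−√(1−γ))). -/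
/-!
Write `s = √(1-γ) < 1`, `T = Tr M`, and let `P = contracted s M` be `M` with its Bloch `z`-component
multiplied by `s`. In the Heisenberg picture the channel acts by
`E†(M) = (T / 2) (1 - s) I + s P` (`trace_mul_gadChannel`).
Since `P` is a convex combination of `M` and `X Mᵀ X` (with `X` the Pauli flip), `P ≥ 0`; since `T I - P`
is the adjugate of `P`, also `P ≤ T I`. So `P / T` is an effect, and closeness of the states gives
`Tr (P (ρ - σ)) ≤ T d`. Hence the outcome probability for `ρ` exceeds that for `σ` by at most
`s T d`, while the latter is at least `(T / 2) (1 - s)`; the ratio of these bounds is `2 d s / (1 - s)`.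
-/

open Matrix Complex ComplexOrder

/-- Kraus operators of the generalized amplitude damping channel with
environment parameter `p = 1/2` and damping parameter `γ`. -/
noncomputable def gadKraus (γ : ℝ) : Fin 4 → Matrix (Fin 2) (Fin 2) ℂ
  | 0 => (Real.sqrt (1 / 2) : ℂ) • !![1, 0; 0, (Real.sqrt (1 - γ) : ℂ)]
  | 1 => (Real.sqrt (1 / 2) : ℂ) • !![0, (Real.sqrt γ : ℂ); 0, 0]
  | 2 => (Real.sqrt (1 / 2) : ℂ) • !![(Real.sqrt (1 - γ) : ℂ), 0; 0, 1]
  | 3 => (Real.sqrt (1 / 2) : ℂ) • !![0, 0; (Real.sqrt γ : ℂ), 0]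

/-- The generalized amplitude damping channel with `p = 1/2`. -/
noncomputable def gadChannel (γ : ℝ) (ρ : Matrix (Fin 2) (Fin 2) ℂ) :
    Matrix (Fin 2) (Fin 2) ℂ :=
  ∑ k : Fin 4, gadKraus γ k * ρ * (gadKraus γ k)ᴴ

/-- The 2×2 matrix whose Bloch vector is that of `M` with its `z`-component multiplied by `s`; the
trace and the off-diagonal entries are unchanged. -/
noncomputable def contracted (s : ℝ) (M : Matrix (Fin 2) (Fin 2) ℂ) : Matrix (Fin 2) (Fin 2) ℂ :=
  !![((1 + s) / 2) * M 0 0 + ((1 - s) / 2) * M 1 1, M 0 1;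
     M 1 0, ((1 - s) / 2) * M 0 0 + ((1 + s) / 2) * M 1 1]

/-- The Heisenberg-picture form of the channel, paired with an arbitrary matrix `ρ`. -/
lemma trace_mul_gadChannel {γ : ℝ} (hγ0 : 0 ≤ γ) (hγ1 : γ ≤ 1)
    (M ρ : Matrix (Fin 2) (Fin 2) ℂ) :
    (M * gadChannel γ ρ).trace =
      M.trace / 2 * (1 - (√(1 - γ) : ℂ)) * ρ.trace
        + (√(1 - γ) : ℂ) * (contracted (√(1 - γ)) M * ρ).trace := by
  have h2 : ((√(1 / 2) : ℝ) : ℂ) ^ 2 = 1 / 2 := by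
    rw [← Complex.ofReal_pow, Real.sq_sqrt (by norm_num)]; norm_num
  have hs : ((√(1 - γ) : ℝ) : ℂ) ^ 2 = 1 - γ := by
    rw [← Complex.ofReal_pow, Real.sq_sqrt (by linarith)]; norm_num
  have hg : ((√γ : ℝ) : ℂ) ^ 2 = γ := by
    rw [← Complex.ofReal_pow, Real.sq_sqrt hγ0]
  simp only [gadChannel, Fin.sum_univ_four, gadKraus, contracted]
  generalize √(1 / 2) = h at *
  generalize √(1 - γ) = s at *
  generalize √γ = g at *
  simp [Matrix.trace_fin_two, Matrix.mul_apply, Fin.sum_univ_two, Matrix.vecMul, dotProduct,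
    Matrix.vecHead, Matrix.vecTail]
  linear_combination
    (M 0 0 * ρ 0 0 * (1 + (s : ℂ) ^ 2) + M 1 1 * ρ 1 1 * (1 + (s : ℂ) ^ 2)
      + (g : ℂ) ^ 2 * (M 0 0 * ρ 1 1 + M 1 1 * ρ 0 0)
      + 2 * (s : ℂ) * (M 0 1 * ρ 1 0 + M 1 0 * ρ 0 1)) * h2
    + (M 0 0 * ρ 1 1 + M 1 1 * ρ 0 0) / 2 * (hg + hs)

/-- `contracted s M = (1 + s) / 2 • M + (1 - s) / 2 • X Mᵀ X`, where conjugation by the Pauli flip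
`X` is a reindexing. -/
lemma contracted_posSemidef {s : ℝ} (hs0 : 0 ≤ s) (hs1 : s ≤ 1)
    {M : Matrix (Fin 2) (Fin 2) ℂ} (hM : M.PosSemidef) : (contracted s M).PosSemidef := by
  have h : contracted s M = ((1 + s) / 2 : ℝ) • M
      + ((1 - s) / 2 : ℝ) • Mᵀ.submatrix (Equiv.swap 0 1) (Equiv.swap 0 1) := by
    ext i j
    fin_cases i <;> fin_cases j <;> simp [contracted] <;> ring
  rw [h]
  exact (hM.smul (by linarith)).add ((hM.transpose.submatrix _).smul (by linarith))

/-- For a 2×2 matrix, `Tr P • I - P` is the adjugate of `P`, equal to `J Pᵀ J†` with `J` the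
symplectic form. -/
lemma trace_smul_one_sub_posSemidef {P : Matrix (Fin 2) (Fin 2) ℂ} (hP : P.PosSemidef) :
    (P.trace • (1 : Matrix (Fin 2) (Fin 2) ℂ) - P).PosSemidef := by
  have h : P.trace • (1 : Matrix (Fin 2) (Fin 2) ℂ) - P
      = !![0, 1; -1, 0] * Pᵀ * (!![0, 1; -1, 0] : Matrix (Fin 2) (Fin 2) ℂ)ᴴ := by
    ext i j
    fin_cases i <;> fin_cases j <;>
      simp [Matrix.mul_apply, Matrix.trace_fin_two, Matrix.vecMul, dotProduct, Fin.sum_univ_two]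
  rw [h]
  exact hP.transpose.mul_mul_conjTranspose_same _

open scoped MatrixOrder in
lemma trace_mul_re_nonneg {n : ℕ} {A B : Matrix (Fin n) (Fin n) ℂ} (hA : A.PosSemidef)
    (hB : B.PosSemidef) : 0 ≤ ((A * B).trace).re := by
  obtain ⟨C, rfl⟩ := CStarAlgebra.nonneg_iff_eq_star_mul_self.1 hA.nonneg
  rw [Matrix.star_eq_conjTranspose, Matrix.mul_assoc, Matrix.trace_mul_comm]
  exact (Complex.le_def.1 (hB.mul_mul_conjTranspose_same C).trace_nonneg).1

/-- The generalized amplitude damping mechanism provides `ε`-QDP with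
`ε = ln (1 + 2 d √(1-γ) / (1 - √(1-γ)))`. -/
theorem gad_mechanism_QDP
    {γ d : ℝ} (hγ0 : 0 < γ) (hγ1 : γ ≤ 1) (hd : 0 ≤ d)
    (ρ σ : Matrix (Fin 2) (Fin 2) ℂ)
    (hρ : IsDensityMatrix ρ) (hσ : IsDensityMatrix σ)
    (hclose : TraceClose d ρ σ)
    (M : Matrix (Fin 2) (Fin 2) ℂ) (hM : IsEffect M) :
    ((M * gadChannel γ ρ).trace).re ≤
      (1 + 2 * d * Real.sqrt (1 - γ) / (1 - Real.sqrt (1 - γ))) *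
        ((M * gadChannel γ σ).trace).re := by
  have hs0 : 0 ≤ √(1 - γ) := Real.sqrt_nonneg _
  have hs1 : √(1 - γ) < 1 := by
    rw [Real.sqrt_lt' one_pos]; linarith
  rw [trace_mul_gadChannel hγ0.le hγ1, trace_mul_gadChannel hγ0.le hγ1, hρ.2, hσ.2]
  set s := √(1 - γ)
  set P := contracted s M with hPdef
  have hP : P.PosSemidef := contracted_posSemidef hs0 hs1.le hM.1
  have hPtr : P.trace = M.trace := by
    simp [hPdef, contracted, Matrix.trace_fin_two]; ring
  obtain ⟨T, hT0, hT⟩ : ∃ T : ℝ, 0 ≤ T ∧ M.trace = T := by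
    have h := Complex.le_def.1 hM.1.trace_nonneg
    exact ⟨M.trace.re, h.1, Complex.ext rfl (by simpa using h.2.symm)⟩
  have hq : 0 ≤ ((P * σ).trace).re := trace_mul_re_nonneg hP hσ.1
  have hpq : ((P * ρ).trace).re - ((P * σ).trace).re ≤ T * d := by
    -- If `T = 0` then `P = 0`; otherwise `P / T` is an effect to which closeness applies.
    rcases hT0.eq_or_lt with h0 | hpos
    · have hP0 : P = 0 := by
        rw [← hP.trace_eq_zero_iff, hPtr, hT, ← h0, Complex.ofReal_zero]
      simp [hP0, ← h0]
    · have heff : IsEffect ((T⁻¹ : ℝ) • P) := by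
        refine ⟨hP.smul (by positivity), ?_⟩
        have h := (trace_smul_one_sub_posSemidef hP).smul (inv_nonneg.2 hT0)
        convert h using 1
        rw [hPtr, hT, smul_sub, Complex.coe_smul, smul_smul, inv_mul_cancel₀ hpos.ne', one_smul]
      have h := hclose _ heff
      rw [Matrix.smul_mul, Matrix.trace_smul, Complex.smul_re, Matrix.mul_sub, Matrix.trace_sub,
        Complex.sub_re, smul_eq_mul, inv_mul_le_iff₀ hpos] at h
      exact h
  have hre : ∀ z : ℂ, ((T : ℂ) / 2 * (1 - (s : ℂ)) * 1 + (s : ℂ) * z).re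
      = T / 2 * (1 - s) + s * z.re := by
    intro z
    have h : (T : ℂ) / 2 * (1 - (s : ℂ)) * 1 = ((T / 2 * (1 - s) : ℝ) : ℂ) := by
      push_cast; ring
    rw [h, Complex.add_re, Complex.re_ofReal_mul, Complex.ofReal_re]
  rw [hT, hre, hre]
  generalize ((P * ρ).trace).re = p at *
  generalize ((P * σ).trace).re = q at *
  have h1s : 0 < 1 - s := by linarith
  have hexp : (1 + 2 * d * s / (1 - s)) * (T / 2 * (1 - s) + s * q)
      = T / 2 * (1 - s) + s * q + s * (T * d) + 2 * d * s / (1 - s) * (s * q) := by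
    field_simp
    ring
  have hrest : 0 ≤ 2 * d * s / (1 - s) * (s * q) := by positivity
  rw [hexp]
  nlinarith [mul_le_mul_of_nonneg_left hpq hs0]
end

section
/- Let D ≥ 1, d > 0, ε > 0, let ρ and σ be density matrices on ℂ^D that are d-close in trace distance, and let M be a measurement effect on ℂ^D. For μ ∈ ℝ, let Lap_μ denote the measure on ℝ with density x ↦ (ε/(2d)) · exp(−ε·|x − μ|/d) with respect to Lebesgue measure (the Laplace distribution with mean μ and scale d/ε). Then for every measurable set S ⊆ ℝ, Lap_{Re Tr(Mρ)}(S) ≤ exp(ε) · Lap_{Re Tr(Mσ)}(S). That is, releasing the measurement expectation value Re Tr(Mρ) perturbed by Laplace noise of scale d/ε satisfies ε-differential privacy with respect to d-close quantum states. -/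
/-! Testing closeness of `ρ` and `σ` against both `M` and `1 - M`, and using
`Tr ρ = Tr σ = 1`, gives `|Re Tr (Mρ) - Re Tr (Mσ)| ≤ d`. By the triangle inequality the
two Laplace densities of scale `d / ε` then differ pointwise by a factor of at most `exp ε`,
and integrating over `S` gives the claim. -/

open Matrix Complex ComplexOrder

open MeasureTheory

/-- The Laplace distribution with mean `μ` and scale `d / ε`, as a measure with
density `x ↦ (ε/(2d)) · exp (−ε |x − μ| / d)` with respect to Lebesgue measure. -/
noncomputable def laplaceMeasure (ε d μ : ℝ) : Measure ℝ :=
  volume.withDensity fun x =>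
    ENNReal.ofReal ((ε / (2 * d)) * Real.exp (-(ε * |x - μ|) / d))

/-- Two-sided form of closeness: for density matrices the bound `d` also controls the
difference in the other direction, because `1 - M` is an effect and the traces agree. -/
theorem abs_re_trace_sub_le {D : ℕ} {d : ℝ} {ρ σ M : Matrix (Fin D) (Fin D) ℂ}
    (hρ : IsDensityMatrix ρ) (hσ : IsDensityMatrix σ)
    (hclose : TraceClose d ρ σ) (hM : IsEffect M) :
    |((M * ρ).trace).re - ((M * σ).trace).re| ≤ d := by
  have h1 := hclose M hM
  have h2 := hclose (1 - M) ⟨hM.2, by simpa using hM.1⟩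
  simp only [Matrix.mul_sub, Matrix.sub_mul, Matrix.one_mul, Matrix.trace_sub, hρ.2, hσ.2,
    Complex.sub_re] at h1 h2
  rw [abs_le]
  constructor <;> linarith

theorem laplace_density_le {d ε a b : ℝ} (hd : 0 < d) (hε : 0 < ε) (hab : |a - b| ≤ d) (x : ℝ) :
    ε / (2 * d) * Real.exp (-(ε * |x - a|) / d) ≤
      Real.exp ε * (ε / (2 * d) * Real.exp (-(ε * |x - b|) / d)) := by
  have htri : |x - b| ≤ |x - a| + d := (abs_sub_le x a b).trans (by linarith)
  have hexp : -(ε * |x - a|) / d ≤ ε + -(ε * |x - b|) / d := by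
    rw [div_le_iff₀ hd, add_mul, div_mul_cancel₀ _ hd.ne']
    nlinarith
  calc ε / (2 * d) * Real.exp (-(ε * |x - a|) / d)
      ≤ ε / (2 * d) * Real.exp (ε + -(ε * |x - b|) / d) := by gcongr
    _ = _ := by rw [Real.exp_add]; ring

/-- Releasing the measurement expectation value perturbed by Laplace noise of
scale `d / ε` satisfies `ε`-differential privacy over `d`-close states. -/
theorem laplace_mechanism_DP
    {D : ℕ} (hD : 1 ≤ D) {d ε : ℝ} (hd : 0 < d) (hε : 0 < ε)
    (ρ σ : Matrix (Fin D) (Fin D) ℂ)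
    (hρ : IsDensityMatrix ρ) (hσ : IsDensityMatrix σ)
    (hclose : TraceClose d ρ σ)
    (M : Matrix (Fin D) (Fin D) ℂ) (hM : IsEffect M)
    (S : Set ℝ) (hS : MeasurableSet S) :
    laplaceMeasure ε d (((M * ρ).trace).re) S ≤
      ENNReal.ofReal (Real.exp ε) * laplaceMeasure ε d (((M * σ).trace).re) S := by
  have hdiff := abs_re_trace_sub_le hρ hσ hclose hM
  set a := ((M * ρ).trace).re
  set b := ((M * σ).trace).re
  unfold laplaceMeasure
  rw [withDensity_apply _ hS, withDensity_apply _ hS,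
    ← lintegral_const_mul' _ _ ENNReal.ofReal_ne_top]
  refine lintegral_mono fun x => ?_
  rw [← ENNReal.ofReal_mul (Real.exp_pos ε).le]
  exact ENNReal.ofReal_le_ofReal (laplace_density_le hd hε hdiff x)
end

section
/- Let D ≥ 1, d > 0, ε ∈ (0,1), δ ∈ (0,1), let ρ and σ be density matrices on ℂ^D that are d-close in trace distance, and let M be a measurement effect on ℂ^D. Set the noise variance v = 2·ln(1.25/δ)·d²/ε². Then for every measurable set S ⊆ ℝ, N(Re Tr(Mρ), v)(S) ≤ exp(ε) · N(Re Tr(Mσ), v)(S) + δ, where N(μ, v) denotes the Gaussian measure on ℝ with mean μ and variance v. That is, releasing the measurement expectation value perturbed by Gaussian noise of variance 2·ln(1.25/δ)·d²/ε² satisfies (ε, δ)-differential privacy with respect to d-close quantum states. -/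
/-!
Testing closeness against `M` and against `1 - M` shows that the two means `μ₁, μ₂` differ by at
most `d`; after a reflection of the line one may assume `μ₂ ≤ μ₁`. Write `L = log (1.25 / δ)`. The
likelihood ratio of the two Gaussians is at most `exp ε` on `(-∞, μ₁ + a]`, where
`a = ε v / d - d / 2 = d (2 L / ε - 1 / 2)`, so it is enough to bound the tail
`N(μ₁, v)((μ₁ + a, ∞))` by `δ`.

* If `a ≥ 0`, the tail bound `exp (-a² / (2 v)) / 2` (with its factor `1 / 2`, which plain Chernoff
  lacks) gives at most `exp (1 / 2 - L) / 2 = exp (1 / 2) δ / 2.5 ≤ δ`.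
* If `a < 0`, then `L < 1 / 4`, so `δ ≥ 15 / 16`, while `|a| ≤ √v / 4`. As the density is at most
  `1 / √v`, the tail is at most `1 / 2 + 1 / 4`.
-/

open Matrix Complex ComplexOrder

open MeasureTheory ProbabilityTheory

open scoped NNReal ENNReal

/-- A pointwise bound on the likelihood ratio over `A` bounds the ratio of the masses of `A`. -/
lemma gaussianReal_le_of_ratio {μ₁ μ₂ : ℝ} {v : ℝ≥0} (hv : v ≠ 0) {A : Set ℝ} (k : ℝ)
    (h : ∀ x ∈ A, (x - μ₂) ^ 2 - (x - μ₁) ^ 2 ≤ 2 * v * k) :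
    gaussianReal μ₁ v A ≤ ENNReal.ofReal (Real.exp k) * gaussianReal μ₂ v A := by
  have hv' : (0 : ℝ) < v := by positivity
  rw [gaussianReal_apply _ hv, gaussianReal_apply _ hv,
    ← lintegral_const_mul _ (measurable_gaussianPDF _ _)]
  refine setLIntegral_mono ((measurable_gaussianPDF _ _).const_mul _) fun x hx => ?_
  rw [gaussianPDF, gaussianPDF, ← ENNReal.ofReal_mul (Real.exp_pos _).le]
  apply ENNReal.ofReal_le_ofReal
  rw [gaussianPDFReal, gaussianPDFReal, mul_left_comm, ← Real.exp_add]
  gcongr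
  have := h x hx
  rw [div_le_iff₀ (by positivity), add_mul, div_mul_cancel₀ _ (by positivity)]
  linarith

lemma gaussianReal_neg_preimage (μ : ℝ) (v : ℝ≥0) {A : Set ℝ} (hA : MeasurableSet A) :
    gaussianReal μ v ((fun x => -x) ⁻¹' A) = gaussianReal (-μ) v A := by
  rw [← gaussianReal_map_neg, Measure.map_apply measurable_neg hA]

lemma gaussianReal_add_preimage (μ y : ℝ) (v : ℝ≥0) {A : Set ℝ} (hA : MeasurableSet A) :
    gaussianReal μ v ((fun x => x + y) ⁻¹' A) = gaussianReal (μ + y) v A := by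
  rw [← gaussianReal_map_add_const, Measure.map_apply (measurable_add_const y) hA]

lemma gaussianReal_Ioi_mean (μ : ℝ) (v : ℝ≥0) :
    gaussianReal μ v (Set.Ioi μ) ≤ ENNReal.ofReal (1 / 2) := by
  -- The reflection `x ↦ 2 μ - x` preserves the measure and exchanges the two half-lines.
  have h : gaussianReal μ v (Set.Iio μ) = gaussianReal μ v (Set.Ioi μ) := by
    have h1 := gaussianReal_neg_preimage μ v (A := Set.Ioi (-μ)) measurableSet_Ioi
    have h2 := gaussianReal_add_preimage (-μ) (2 * μ) v (A := Set.Ioi μ) measurableSet_Ioi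
    have e1 : (fun x : ℝ => -x) ⁻¹' Set.Ioi (-μ) = Set.Iio μ := by ext x; simp
    have e2 : (fun x : ℝ => x + 2 * μ) ⁻¹' Set.Ioi μ = Set.Ioi (-μ) := by
      ext x
      simp only [Set.mem_preimage, Set.mem_Ioi]
      constructor <;> intro h <;> linarith
    rw [e1] at h1
    rw [e2, show -μ + 2 * μ = μ by ring] at h2
    rw [h1, h2]
  have hu : gaussianReal μ v (Set.Iio μ) + gaussianReal μ v (Set.Ioi μ) ≤ 1 := by
    have hdisj : Disjoint (Set.Iio μ) (Set.Ioi μ) :=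
      Set.disjoint_left.2 fun x h1 h2 => lt_asymm (Set.mem_Iio.1 h1) h2
    rw [← measure_union hdisj measurableSet_Ioi]
    exact prob_le_one
  rw [h] at hu
  have hr := ENNReal.toReal_mono ENNReal.one_ne_top hu
  rw [ENNReal.toReal_add (measure_ne_top _ _) (measure_ne_top _ _), ENNReal.toReal_one] at hr
  rw [← ENNReal.ofReal_toReal (measure_ne_top (gaussianReal μ v) (Set.Ioi μ))]
  exact ENNReal.ofReal_le_ofReal (by linarith)

/-- Gaussian tail bound with the constant `1 / 2`: shifting the tail back to the mean costs a
likelihood ratio of at most `exp (-a² / (2 v))`. -/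
lemma gaussianReal_tail {μ a : ℝ} {v : ℝ≥0} (hv : v ≠ 0) (ha : 0 ≤ a) :
    gaussianReal μ v (Set.Ioi (μ + a)) ≤
      ENNReal.ofReal (Real.exp (-(a ^ 2 / (2 * v))) * (1 / 2)) := by
  have hv' : (0 : ℝ) < v := by positivity
  have e : (fun x : ℝ => x + -a) ⁻¹' Set.Ioi μ = Set.Ioi (μ + a) := by
    ext x
    simp only [Set.mem_preimage, Set.mem_Ioi]
    constructor <;> intro h <;> linarith
  rw [← e, gaussianReal_add_preimage _ _ _ measurableSet_Ioi,
    ENNReal.ofReal_mul (Real.exp_pos _).le]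
  refine (gaussianReal_le_of_ratio (μ₂ := μ) hv (-(a ^ 2 / (2 * v))) ?_).trans
    (mul_le_mul_right (gaussianReal_Ioi_mean μ v) _)
  intro x hx
  have hx' : 0 < x - μ := sub_pos.2 hx
  have : 2 * (v : ℝ) * -(a ^ 2 / (2 * v)) = -a ^ 2 := by field_simp
  rw [this]
  nlinarith [mul_nonneg hx'.le ha]

/-- Left of the mean, the tail exceeds `1 / 2` by at most `b / √v`, as the density is at most
`1 / √v`. -/
lemma gaussianReal_tail_neg {μ b : ℝ} {v : ℝ≥0} (hv : v ≠ 0) (hbv : 4 * b ≤ √v) :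
    gaussianReal μ v (Set.Ioi (μ - b)) ≤ ENNReal.ofReal (3 / 4) := by
  have hv' : (0 : ℝ) < v := by positivity
  have hs : 0 < √(v : ℝ) := Real.sqrt_pos.2 hv'
  have h1 : gaussianReal μ v (Set.Ioc (μ - b) μ) ≤ ENNReal.ofReal (1 / 4) := by
    rw [gaussianReal_apply _ hv]
    calc ∫⁻ x in Set.Ioc (μ - b) μ, gaussianPDF μ v x
        ≤ ∫⁻ _ in Set.Ioc (μ - b) μ, ENNReal.ofReal (√v)⁻¹ := by
          refine lintegral_mono fun x => ENNReal.ofReal_le_ofReal ?_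
          rw [gaussianPDFReal]
          calc (√(2 * Real.pi * v))⁻¹ * Real.exp (-(x - μ) ^ 2 / (2 * v))
              ≤ (√v)⁻¹ * 1 := by
                gcongr
                · nlinarith [Real.pi_gt_three]
                · rw [Real.exp_le_one_iff]
                  exact div_nonpos_of_nonpos_of_nonneg (by nlinarith [sq_nonneg (x - μ)])
                    (by positivity)
            _ = (√v)⁻¹ := mul_one _
      _ = ENNReal.ofReal ((√v)⁻¹ * b) := by
          rw [setLIntegral_const, Real.volume_Ioc, sub_sub_cancel,
            ENNReal.ofReal_mul (by positivity)]
      _ ≤ ENNReal.ofReal (1 / 4) := by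
          apply ENNReal.ofReal_le_ofReal
          rw [inv_mul_le_iff₀ hs]
          linarith
  calc gaussianReal μ v (Set.Ioi (μ - b))
      ≤ gaussianReal μ v (Set.Ioc (μ - b) μ ∪ Set.Ioi μ) := by
        apply measure_mono
        intro x hx
        rcases le_or_gt x μ with h | h
        · exact Or.inl ⟨hx, h⟩
        · exact Or.inr h
    _ ≤ _ := measure_union_le _ _
    _ ≤ ENNReal.ofReal (1 / 4) + ENNReal.ofReal (1 / 2) :=
        add_le_add h1 (gaussianReal_Ioi_mean μ v)
    _ = ENNReal.ofReal (3 / 4) := by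
        rw [← ENNReal.ofReal_add (by norm_num) (by norm_num)]; norm_num

/-- The noise scale is calibrated so that the region of large likelihood ratio has mass at most
`δ`. -/
lemma gaussianReal_bad_region {d ε δ μ : ℝ} {v : ℝ≥0} (hd : 0 < d) (hε0 : 0 < ε) (hε1 : ε < 1)
    (hδ0 : 0 < δ) (hδ1 : δ < 1) (hv : (v : ℝ) = 2 * Real.log (1.25 / δ) * d ^ 2 / ε ^ 2) :
    gaussianReal μ v (Set.Ioi (μ + (ε * v / d - d / 2))) ≤ ENNReal.ofReal δ := by
  set L := Real.log (1.25 / δ) with hL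
  have hpos : 0 < 1.25 / δ := by positivity
  have hδL : δ = 1.25 * Real.exp (-L) := by
    rw [Real.exp_neg, hL, Real.exp_log hpos]; field_simp
  have hL5 : 1 / 5 ≤ L := by
    have h1 := Real.one_sub_inv_le_log_of_pos hpos
    rw [inv_div] at h1
    rw [← hL] at h1
    linarith [show δ / 1.25 ≤ 4 / 5 by rw [div_le_iff₀ (by norm_num)]; linarith]
  have hvpos : (0 : ℝ) < v := by rw [hv]; positivity
  have hv0 : v ≠ 0 := fun h => by simp [h] at hvpos
  have ha : ε * v / d - d / 2 = d * (2 * L / ε - 1 / 2) := by rw [hv]; field_simp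
  rw [ha]
  rcases le_or_gt 0 (2 * L / ε - 1 / 2) with h | h
  · refine (gaussianReal_tail hv0 (mul_nonneg hd.le h)).trans (ENNReal.ofReal_le_ofReal ?_)
    have hexp : (d * (2 * L / ε - 1 / 2)) ^ 2 / (2 * v) = L - ε / 2 + ε ^ 2 / (16 * L) := by
      rw [hv]; field_simp; ring
    have h0 : 0 ≤ ε ^ 2 / (16 * L) := by positivity
    have h2 : Real.exp (-(L - ε / 2 + ε ^ 2 / (16 * L))) ≤ Real.exp (1 / 2) * Real.exp (-L) := by
      rw [← Real.exp_add, Real.exp_le_exp]; linarith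
    have h3 : Real.exp (1 / 2) ≤ 2.5 := by
      have hsq : Real.exp (1 / 2) * Real.exp (1 / 2) = Real.exp 1 := by
        rw [← Real.exp_add]; norm_num
      nlinarith [Real.exp_one_lt_d9, Real.exp_pos (1 / 2)]
    rw [hexp, hδL]
    nlinarith [Real.exp_pos (-L)]
  · have h2 : 2 * L < ε / 2 := by
      have : 2 * L / ε < 1 / 2 := by linarith
      rw [div_lt_iff₀ hε0] at this; linarith
    have hδ : 3 / 4 ≤ δ := by
      have := Real.add_one_le_exp (-L)
      rw [hδL]; linarith
    have hb := gaussianReal_tail_neg (μ := μ) (b := d * (1 / 2 - 2 * L / ε)) hv0 ?_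
    · rw [show μ + d * (2 * L / ε - 1 / 2) = μ - d * (1 / 2 - 2 * L / ε) by ring]
      exact hb.trans (ENNReal.ofReal_le_ofReal hδ)
    · apply Real.le_sqrt_of_sq_le
      have e1 : (4 * (d * (1 / 2 - 2 * L / ε))) ^ 2 = (2 * ε - 8 * L) ^ 2 * (d ^ 2 / ε ^ 2) := by
        field_simp; ring
      rw [e1, hv, mul_div_assoc]
      gcongr
      nlinarith

/-- The Gaussian mechanism on the line, for means in decreasing order. -/
lemma gaussianReal_DP_of_le {d ε δ μ₁ μ₂ : ℝ} {v : ℝ≥0} (hd : 0 < d) (hε0 : 0 < ε) (hε1 : ε < 1)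
    (hδ0 : 0 < δ) (hδ1 : δ < 1) (hv : (v : ℝ) = 2 * Real.log (1.25 / δ) * d ^ 2 / ε ^ 2)
    (hle : μ₂ ≤ μ₁) (hcl : μ₁ - μ₂ ≤ d) (S : Set ℝ) :
    gaussianReal μ₁ v S ≤
      ENNReal.ofReal (Real.exp ε) * gaussianReal μ₂ v S + ENNReal.ofReal δ := by
  have hlog : 0 < Real.log (1.25 / δ) :=
    Real.log_pos (by rw [lt_div_iff₀ hδ0]; linarith)
  have hvpos : (0 : ℝ) < v := by rw [hv]; positivity
  have hv0 : v ≠ 0 := fun h => by simp [h] at hvpos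
  set a := ε * v / d - d / 2 with ha
  have hgood : gaussianReal μ₁ v (S ∩ Set.Iic (μ₁ + a)) ≤
      ENNReal.ofReal (Real.exp ε) * gaussianReal μ₂ v (S ∩ Set.Iic (μ₁ + a)) := by
    refine gaussianReal_le_of_ratio hv0 ε ?_
    rintro x ⟨-, hx⟩
    have hx' : x ≤ μ₁ + a := hx
    have had : d * (a + d / 2) = ε * v := by rw [ha]; field_simp; ring
    have hpos : 0 < ε * v := by positivity
    have hw : 0 < a + d / 2 := by
      by_contra hcon
      nlinarith
    -- With `Δ = μ₁ - μ₂ ≤ d`, the left side is `2 Δ (x - μ₁ + Δ / 2) ≤ 2 Δ (a + d / 2)`.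
    nlinarith [mul_nonneg (sub_nonneg.2 hle) (sub_nonneg.2 hx'),
      mul_nonneg (sub_nonneg.2 hle) (sub_nonneg.2 hcl),
      mul_nonneg (sub_nonneg.2 hcl) hw.le]
  calc gaussianReal μ₁ v S
      ≤ gaussianReal μ₁ v ((S ∩ Set.Iic (μ₁ + a)) ∪ Set.Ioi (μ₁ + a)) := by
        apply measure_mono
        intro x hx
        rcases le_or_gt x (μ₁ + a) with h | h
        · exact Or.inl ⟨hx, h⟩
        · exact Or.inr h
    _ ≤ _ := measure_union_le _ _
    _ ≤ ENNReal.ofReal (Real.exp ε) * gaussianReal μ₂ v S + ENNReal.ofReal δ := by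
        refine add_le_add (hgood.trans ?_) (gaussianReal_bad_region hd hε0 hε1 hδ0 hδ1 hv)
        gcongr
        exact Set.inter_subset_left

/-- Releasing the measurement expectation value perturbed by Gaussian noise of
variance `2 ln(1.25/δ) d² / ε²` satisfies `(ε, δ)`-differential privacy over
`d`-close quantum states. -/
theorem gaussian_mechanism_DP
    {D : ℕ} (hD : 1 ≤ D) {d ε δ : ℝ} (hd : 0 < d)
    (hε0 : 0 < ε) (hε1 : ε < 1) (hδ0 : 0 < δ) (hδ1 : δ < 1)
    (ρ σ : Matrix (Fin D) (Fin D) ℂ)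
    (hρ : IsDensityMatrix ρ) (hσ : IsDensityMatrix σ)
    (hclose : TraceClose d ρ σ)
    (M : Matrix (Fin D) (Fin D) ℂ) (hM : IsEffect M)
    (S : Set ℝ) (hS : MeasurableSet S) :
    gaussianReal (((M * ρ).trace).re)
        (2 * Real.log (1.25 / δ) * d ^ 2 / ε ^ 2).toNNReal S ≤
      ENNReal.ofReal (Real.exp ε) *
        gaussianReal (((M * σ).trace).re)
          (2 * Real.log (1.25 / δ) * d ^ 2 / ε ^ 2).toNNReal S +
      ENNReal.ofReal δ := by
  have hcast : (((2 * Real.log (1.25 / δ) * d ^ 2 / ε ^ 2).toNNReal : ℝ≥0) : ℝ) =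
      2 * Real.log (1.25 / δ) * d ^ 2 / ε ^ 2 := by
    have hlog : 0 < Real.log (1.25 / δ) :=
      Real.log_pos (by rw [lt_div_iff₀ hδ0]; linarith)
    exact Real.coe_toNNReal _ (by positivity)
  have h1 : ((M * ρ).trace).re - ((M * σ).trace).re ≤ d := by
    have := hclose M hM
    rwa [mul_sub, Matrix.trace_sub, Complex.sub_re] at this
  -- `1 - M` is again an effect, and `ρ - σ` is traceless.
  have h2 : ((M * σ).trace).re - ((M * ρ).trace).re ≤ d := by
    have := hclose (1 - M) ⟨hM.2, by rw [sub_sub_cancel]; exact hM.1⟩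
    rw [sub_mul, one_mul, mul_sub, Matrix.trace_sub, Matrix.trace_sub, Matrix.trace_sub, hρ.2,
      hσ.2, sub_self, zero_sub, neg_sub, Complex.sub_re] at this
    exact this
  rcases le_total ((M * σ).trace).re ((M * ρ).trace).re with hle | hle
  · exact gaussianReal_DP_of_le hd hε0 hε1 hδ0 hδ1 hcast hle h1 S
  · have := gaussianReal_DP_of_le hd hε0 hε1 hδ0 hδ1 hcast (neg_le_neg hle)
      (by linarith : -((M * ρ).trace).re - -((M * σ).trace).re ≤ d)
      ((fun x : ℝ => -x) ⁻¹' S)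
    rwa [gaussianReal_neg_preimage _ _ hS, gaussianReal_neg_preimage _ _ hS, neg_neg,
      neg_neg] at this
end
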